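/- (The generalized Poisson system (11) is a prolongation of the first-order system (8).) Let X^i_α : ℝ^p × ℝ^n → ℝ be smooth. If a smooth map x : ℝ^p → ℝ^n satisfies x^i_α(t) = X^i_α(t, x(t)) for all t, i, α, then for all t and all i it satisfies h^{αβ} x^i_{αβ} = g^{ih} h^{αβ} g_{kj} (∇_h X^k_α) X^j_β + h^{αβ} F_j{}^i{}_α x^j_β + h^{αβ} D_β X^i_α, where all quantities depending on (t,x) are evaluated at (t, x(t)). -/

import Mathlib

/-!
Differentiating `x^i_β = X^i_β(t, x(t))` by the chain rule and inserting the Christoffel terms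
gives `x^i_{αβ} = D_α X^i_β + (∇_j X^i_β) x^j_α` (`covHess_of_solution`). Contracting with the
symmetric `h^{αβ}` (`minv_symm`) exchanges the roles of `α` and `β`. On the other side, the second
summand of `F_j{}^i{}_α`, contracted with `h^{αβ} x^j_β = h^{αβ} X^j_β`, cancels the term
`g^{ih} h^{αβ} g_{kj} (∇_h X^k_α) X^j_β`, leaving the same expression.
-/

open scoped BigOperators

noncomputable section

/-- Partial derivative of `f : ℝ^m → ℝ` at `t` in the `α`-th coordinate direction. -/
def pd {m : ℕ} (α : Fin m) (f : (Fin m → ℝ) → ℝ) (t : Fin m → ℝ) : ℝ :=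
  fderiv ℝ f t (Pi.single α 1)

/-- Componentwise inverse of a square array of reals (matrix inversion). -/
def minv {m : ℕ} (A : Fin m → Fin m → ℝ) : Fin m → Fin m → ℝ :=
  fun i j => (Matrix.of A)⁻¹ i j

/-- `√|det h(t)|`, the volume density of the metric `h`. -/
def sqrtDet {p : ℕ} (h : (Fin p → ℝ) → Fin p → Fin p → ℝ) (t : Fin p → ℝ) : ℝ :=
  Real.sqrt |(Matrix.of (h t)).det|

/-- First jet `x^i_α = ∂x^i/∂t^α` of a map `x : ℝ^p → ℝ^n`. -/
def jet {p n : ℕ} (x : (Fin p → ℝ) → Fin n → ℝ) (t : Fin p → ℝ) :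
    Fin n → Fin p → ℝ :=
  fun i α => pd α (fun s => x s i) t

/-- Christoffel symbols `G^i_{jk} = ½ g^{il}(∂g_{lj}/∂x^k + ∂g_{lk}/∂x^j − ∂g_{jk}/∂x^l)`. -/
def christoffel {m : ℕ} (g : (Fin m → ℝ) → Fin m → Fin m → ℝ)
    (i j k : Fin m) (q : Fin m → ℝ) : ℝ :=
  (1 / 2) * ∑ l, minv (g q) i l *
    (pd k (fun y => g y l j) q + pd j (fun y => g y l k) q - pd l (fun y => g y j k) q)

/-- Covariant second jet
`x^i_{αβ} = ∂²x^i/∂t^α∂t^β − H^γ_{αβ} x^i_γ + G^i_{jk} x^j_α x^k_β`. -/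
def covHess {p n : ℕ} (h : (Fin p → ℝ) → Fin p → Fin p → ℝ)
    (g : (Fin n → ℝ) → Fin n → Fin n → ℝ)
    (x : (Fin p → ℝ) → Fin n → ℝ) (i : Fin n) (α β : Fin p) (t : Fin p → ℝ) : ℝ :=
  pd α (fun s => jet x s i β) t
    - (∑ γ, christoffel h γ α β t * jet x t i γ)
    + ∑ j, ∑ k, christoffel g i j k (x t) * jet x t j α * jet x t k β

/-- `∇_j X^i_α = ∂X^i_α/∂x^j + G^i_{jk} X^k_α`. -/
def nablaX {p n : ℕ} (g : (Fin n → ℝ) → Fin n → Fin n → ℝ)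
    (X : Fin n → Fin p → (Fin p → ℝ) → (Fin n → ℝ) → ℝ)
    (j i : Fin n) (α : Fin p) (t : Fin p → ℝ) (q : Fin n → ℝ) : ℝ :=
  pd j (fun y => X i α t y) q + ∑ k, christoffel g i j k q * X k α t q

/-- `D_β X^i_α = ∂X^i_α/∂t^β − H^γ_{βα} X^i_γ`. -/
def Dt {p n : ℕ} (h : (Fin p → ℝ) → Fin p → Fin p → ℝ)
    (X : Fin n → Fin p → (Fin p → ℝ) → (Fin n → ℝ) → ℝ)
    (β : Fin p) (i : Fin n) (α : Fin p) (t : Fin p → ℝ) (q : Fin n → ℝ) : ℝ :=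
  pd β (fun s => X i α s q) t - ∑ γ, christoffel h γ β α t * X i γ t q

/-- External tensor `F_j{}^i{}_α = ∇_j X^i_α − g_{hj} g^{ik} ∇_k X^h_α`. -/
def Fext {p n : ℕ} (g : (Fin n → ℝ) → Fin n → Fin n → ℝ)
    (X : Fin n → Fin p → (Fin p → ℝ) → (Fin n → ℝ) → ℝ)
    (j i : Fin n) (α : Fin p) (t : Fin p → ℝ) (q : Fin n → ℝ) : ℝ :=
  nablaX g X j i α t q
    - ∑ h', ∑ k, g q h' j * minv (g q) i k * nablaX g X k h' α t q

/-- Potential energy `f = ½ h^{αβ} g_{ij} X^i_α X^j_β`. -/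
def potE {p n : ℕ} (h : (Fin p → ℝ) → Fin p → Fin p → ℝ)
    (g : (Fin n → ℝ) → Fin n → Fin n → ℝ)
    (X : Fin n → Fin p → (Fin p → ℝ) → (Fin n → ℝ) → ℝ)
    (t : Fin p → ℝ) (q : Fin n → ℝ) : ℝ :=
  (1 / 2) * ∑ α, ∑ β, ∑ i, ∑ j, minv (h t) α β * g q i j * X i α t q * X j β t q

/-- A map `x` is an extremal of the first-order Lagrangian `L = L(t, x, x_·)` iff it
satisfies the Euler–Lagrange equations
`∂L/∂x^k − (d/dt^α)(∂L/∂x^k_α) = 0` along the first jet of `x`. -/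
def IsExtremal {p n : ℕ}
    (L : (Fin p → ℝ) → (Fin n → ℝ) → (Fin n → Fin p → ℝ) → ℝ)
    (x : (Fin p → ℝ) → Fin n → ℝ) : Prop :=
  ∀ (t : Fin p → ℝ) (k : Fin n),
    fderiv ℝ (fun q => L t q (jet x t)) (x t) (Pi.single k 1)
      - (∑ α, pd α
          (fun s => fderiv ℝ (fun v => L s (x s) v) (jet x s)
            (Pi.single k (Pi.single α 1))) t) = 0

/-- Chain rule for `s ↦ f (s, x s)` in coordinates, with the two partial derivatives of `f`
taken separately in `t` and in `x`. -/
lemma pd_comp_graph {p n : ℕ} (f : (Fin p → ℝ) → (Fin n → ℝ) → ℝ)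
    (hf : ContDiff ℝ (⊤ : ℕ∞) fun z : (Fin p → ℝ) × (Fin n → ℝ) => f z.1 z.2)
    (x : (Fin p → ℝ) → Fin n → ℝ) (hx : ContDiff ℝ (⊤ : ℕ∞) x)
    (α : Fin p) (t : Fin p → ℝ) :
    pd α (fun s => f s (x s)) t
      = pd α (fun s => f s (x t)) t + ∑ j, pd j (fun y => f t y) (x t) * jet x t j α := by
  have hdx : HasFDerivAt x (fderiv ℝ x t) t := (hx.differentiable (by simp) t).hasFDerivAt
  have hdf := (hf.differentiable (by simp) (t, x t)).hasFDerivAt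
  set L := fderiv ℝ (fun z : (Fin p → ℝ) × (Fin n → ℝ) => f z.1 z.2) (t, x t) with hL
  have h1 : HasFDerivAt (fun s => f s (x s)) _ t :=
    hdf.comp (f := fun s => (s, x s)) t ((hasFDerivAt_id t).prodMk hdx)
  have h2 : HasFDerivAt (fun s => f s (x t)) _ t :=
    hdf.comp (f := fun s => (s, x t)) t ((hasFDerivAt_id t).prodMk (hasFDerivAt_const (x t) t))
  have h3 : HasFDerivAt (fun y => f t y) _ (x t) :=
    hdf.comp (f := fun y => (t, y)) (x t)
      ((hasFDerivAt_const t (x t)).prodMk (hasFDerivAt_id (x t)))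
  have hjet : ∀ j, jet x t j α = fderiv ℝ x t (Pi.single α 1) j := by
    intro j
    have h4 := (hasFDerivAt_pi'.1 hdx) j
    simp only [jet, pd, h4.fderiv]
    rfl
  simp only [hjet, pd, h1.fderiv, h2.fderiv, h3.fderiv]
  -- What remains is `L (e, v) = L (e, 0) + ∑ j, L (0, e_j) * v j`, with `v = dx(e)`.
  have hlin : ∀ (e : Fin p → ℝ) (v : Fin n → ℝ),
      L (e, v) = L (e, 0) + ∑ j, L (0, Pi.single j 1) * v j := by
    intro e v
    have hsplit : (e, v) = (e, 0) + ∑ j, v j • ((0 : Fin p → ℝ), (Pi.single j 1 : Fin n → ℝ)) := by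
      refine Prod.ext ?_ ?_
      · simp [Prod.fst_sum]
      · funext k
        simp [Prod.snd_sum, Finset.sum_apply, Pi.single_apply]
    rw [hsplit, map_add, map_sum]
    simp only [map_smul, smul_eq_mul, mul_comm]
  exact hlin _ _

lemma minv_symm {m : ℕ} (A : Fin m → Fin m → ℝ) (hA : ∀ i j, A i j = A j i) (i j : Fin m) :
    minv A i j = minv A j i := by
  have hT : (Matrix.of A).transpose = Matrix.of A := by
    ext a b
    exact hA b a
  have h1 := Matrix.transpose_nonsing_inv (Matrix.of A)
  rw [hT] at h1
  exact congrFun (congrFun h1 j) i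

/-- Differentiating the first-order system along a solution:
`x^i_{αβ} = D_α X^i_β + (∇_j X^i_β) X^j_α`. -/
lemma covHess_of_solution {p n : ℕ}
    (h : (Fin p → ℝ) → Fin p → Fin p → ℝ) (g : (Fin n → ℝ) → Fin n → Fin n → ℝ)
    (X : Fin n → Fin p → (Fin p → ℝ) → (Fin n → ℝ) → ℝ)
    (Xsmooth : ∀ i α, ContDiff ℝ (⊤ : ℕ∞) fun z : (Fin p → ℝ) × (Fin n → ℝ) => X i α z.1 z.2)
    (x : (Fin p → ℝ) → Fin n → ℝ) (hx : ContDiff ℝ (⊤ : ℕ∞) x)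
    (hsol : ∀ (t : Fin p → ℝ) (i : Fin n) (α : Fin p), jet x t i α = X i α t (x t))
    (t : Fin p → ℝ) (i : Fin n) (α β : Fin p) :
    covHess h g x i α β t
      = Dt h X α i β t (x t) + ∑ j, nablaX g X j i β t (x t) * X j α t (x t) := by
  have key := pd_comp_graph (X i β) (Xsmooth i β) x hx α t
  simp only [hsol] at key
  simp only [covHess, Dt, nablaX, hsol, key, add_mul, Finset.sum_add_distrib, Finset.sum_mul]
  have hG : ∀ j k, christoffel g i j k (x t) * X j α t (x t) * X k β t (x t)
      = christoffel g i j k (x t) * X k β t (x t) * X j α t (x t) := fun j k => by ring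
  simp only [hG]
  ring

/-- the generalized Poisson system (11) is a prolongation of the
first-order system (8). -/
theorem poisson_system_prolongation
    {p n : ℕ} (hp : 0 < p) (hn : 0 < n)
    (h : (Fin p → ℝ) → Fin p → Fin p → ℝ)
    (hsymm : ∀ t α β, h t α β = h t β α)
    (hsmooth : ∀ α β, ContDiff ℝ (⊤ : ℕ∞) fun t => h t α β)
    (hdet : ∀ t, (Matrix.of (h t)).det ≠ 0)
    (g : (Fin n → ℝ) → Fin n → Fin n → ℝ)
    (gsymm : ∀ q i j, g q i j = g q j i)
    (gsmooth : ∀ i j, ContDiff ℝ (⊤ : ℕ∞) fun q => g q i j)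
    (gdet : ∀ q, (Matrix.of (g q)).det ≠ 0)
    (X : Fin n → Fin p → (Fin p → ℝ) → (Fin n → ℝ) → ℝ)
    (Xsmooth : ∀ i α, ContDiff ℝ (⊤ : ℕ∞) fun z : (Fin p → ℝ) × (Fin n → ℝ) => X i α z.1 z.2)
    (x : (Fin p → ℝ) → Fin n → ℝ) (hx : ContDiff ℝ (⊤ : ℕ∞) x)
    (hsol : ∀ (t : Fin p → ℝ) (i : Fin n) (α : Fin p), jet x t i α = X i α t (x t)) :
    ∀ (t : Fin p → ℝ) (i : Fin n),
      ∑ α, ∑ β, minv (h t) α β * covHess h g x i α β t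
        = (∑ h', ∑ α, ∑ β, ∑ k, ∑ j, minv (g (x t)) i h' * minv (h t) α β
            * g (x t) k j * nablaX g X h' k α t (x t) * X j β t (x t))
          + (∑ α, ∑ β, ∑ j, minv (h t) α β * Fext g X j i α t (x t) * jet x t j β)
          + (∑ α, ∑ β, minv (h t) α β * Dt h X β i α t (x t)) := by
  intro t i
  have hswap : ∑ α, ∑ β, minv (h t) α β * covHess h g x i α β t
      = ∑ α, ∑ β, minv (h t) α β * (Dt h X β i α t (x t)
          + ∑ j, nablaX g X j i α t (x t) * X j β t (x t)) := by
    rw [Finset.sum_comm]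
    refine Finset.sum_congr rfl fun β _ => Finset.sum_congr rfl fun α _ => ?_
    rw [covHess_of_solution h g X Xsmooth x hx hsol, minv_symm (h t) (hsymm t) α β]
  have hpot : ∑ h', ∑ α, ∑ β, ∑ k, ∑ j, minv (g (x t)) i h' * minv (h t) α β
        * g (x t) k j * nablaX g X h' k α t (x t) * X j β t (x t)
      = ∑ α, ∑ β, ∑ j, ∑ k, ∑ h', minv (h t) α β * (g (x t) k j * minv (g (x t)) i h'
          * nablaX g X h' k α t (x t)) * X j β t (x t) := by
    rw [Finset.sum_comm]
    refine Finset.sum_congr rfl fun α _ => ?_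
    rw [Finset.sum_comm]
    refine Finset.sum_congr rfl fun β _ => ?_
    rw [Finset.sum_congr rfl fun h' _ => Finset.sum_comm, Finset.sum_comm]
    refine Finset.sum_congr rfl fun j _ => ?_
    rw [Finset.sum_comm]
    refine Finset.sum_congr rfl fun k _ => Finset.sum_congr rfl fun h' _ => ?_
    ring
  rw [hswap, hpot]
  simp only [Fext, hsol, mul_sub, sub_mul, mul_add, Finset.sum_add_distrib,
    Finset.sum_sub_distrib, Finset.mul_sum, Finset.sum_mul, mul_assoc]
  ring
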